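/- arXiv:2105.12630 — 4 statements merged into one kernel-verified Lean document; each statement's English description precedes it below -/
import Mathlib

section
/- Let G be a non-discrete, second countable t.d.l.c. group and let A be a finite simple group. The following are equivalent: (1) for every compact open subgroup U of G, A is a composition factor of U (A occurs among the quotients of some composition series of U); (2) there exist a compact open subgroup U of G and a composition series of U in which A occurs as a quotient at infinitely many indices; (3) for every compact open subgroup U of G there is a composition series of U in which A occurs as a quotient at infinitely many indices. -/
/-- A composition series of a profinite group `G`: a descending chain
`G = H 0 ⊵ H 1 ⊵ ⋯` of closed subgroups with trivial intersection such that at each step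
either `H (i+1)` is a proper normal subgroup of `H i` with simple quotient, or the chain
has already reached the trivial subgroup (this uniformly encodes finite series, padded by
the trivial subgroup, and infinite series). -/
structure ProfiniteCompositionSeries (G : Type*) [Group G] [TopologicalSpace G] where
  H : ℕ → Subgroup G
  top_eq : H 0 = ⊤
  isClosed : ∀ i, IsClosed (H i : Set G)
  antitone : ∀ i, H (i + 1) ≤ H i
  iInf_eq_bot : ⨅ i, H i = ⊥
  normal : ∀ i, ((H (i + 1)).subgroupOf (H i)).Normal
  step : ∀ i, (H (i + 1) < H i ∧
      (letI := normal i
       IsSimpleGroup (↥(H i) ⧸ (H (i + 1)).subgroupOf (H i)))) ∨ H i = ⊥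

/-- The `i`-th composition factor `H i / H (i+1)` of a composition series. -/
def ProfiniteCompositionSeries.factor {G : Type*} [Group G] [TopologicalSpace G]
    (S : ProfiniteCompositionSeries G) (i : ℕ) : Type _ :=
  letI := S.normal i
  ↥(S.H i) ⧸ (S.H (i + 1)).subgroupOf (S.H i)

noncomputable instance {G : Type*} [Group G] [TopologicalSpace G]
    (S : ProfiniteCompositionSeries G) (i : ℕ) : Group (S.factor i) :=
  letI := S.normal i
  inferInstanceAs (Group (↥(S.H i) ⧸ (S.H (i + 1)).subgroupOf (S.H i)))

/-- `A` is a composition factor of the profinite group `H`: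
it occurs among the quotients of some composition series of `H`. -/
def IsCompositionFactor (H : Type*) [Group H] [TopologicalSpace H]
    (A : Type*) [Group A] : Prop :=
  ∃ (S : ProfiniteCompositionSeries H) (i : ℕ),
    S.H (i + 1) < S.H i ∧ Nonempty (S.factor i ≃* A)

/-- `A` occurs with infinite multiplicity in some composition series of `H`. -/
def HasInfiniteMultiplicity (H : Type*) [Group H] [TopologicalSpace H]
    (A : Type*) [Group A] : Prop :=
  ∃ S : ProfiniteCompositionSeries H,
    {i : ℕ | S.H (i + 1) < S.H i ∧ Nonempty (S.factor i ≃* A)}.Infinite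

open Topology

/-- Relative subnormality. -/
inductive SN {G : Type*} [Group G] : Subgroup G → Subgroup G → Prop
  | refl (H : Subgroup G) : SN H H
  | step {L M V : Subgroup G} (hle : L ≤ M) (hn : ∀ m ∈ M, ∀ l ∈ L, m * l * m⁻¹ ∈ L)
      (h : SN M V) : SN L V

namespace SN
variable {G X : Type*} [Group G] [Group X]

lemma le {L V : Subgroup G} (h : SN L V) : L ≤ V := by
  induction h with
  | refl => exact le_rfl
  | step hle _ _ ih => exact hle.trans ih

lemma trans {L M V : Subgroup G} (h : SN L M) (h' : SN M V) : SN L V := by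
  induction h with
  | refl => exact h'
  | step hle hn _ ih => exact .step hle hn (ih h')

lemma inf {L V : Subgroup G} (h : SN L V) (N : Subgroup G) : SN (L ⊓ N) (V ⊓ N) := by
  induction h with
  | refl => exact .refl _
  | step hle hn _ ih =>
    refine .step (inf_le_inf_right _ hle) ?_ ih
    intro m hm l hl
    exact ⟨hn m hm.1 l hl.1, N.mul_mem (N.mul_mem hm.2 hl.2) (N.inv_mem hm.2)⟩

lemma comap {L V : Subgroup G} (h : SN L V) (f : X →* G) : SN (L.comap f) (V.comap f) := by
  induction h with
  | refl => exact .refl _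
  | step hle hn _ ih =>
    refine .step (Subgroup.comap_mono hle) ?_ ih
    intro m hm l hl
    simpa using hn _ hm _ hl

lemma map {L V : Subgroup G} (h : SN L V) (f : G →* X) : SN (L.map f) (V.map f) := by
  induction h with
  | refl => exact .refl _
  | step hle hn _ ih =>
    refine .step (Subgroup.map_mono hle) ?_ ih
    rintro _ ⟨m, hm, rfl⟩ _ ⟨l, hl, rfl⟩
    exact ⟨_, hn m hm l hl, by simp⟩

lemma simple {B : Type*} [Group B] [IsSimpleGroup B] {L V : Subgroup B} (h : SN L V)
    (hV : V = ⊥ ∨ V = ⊤) : L = ⊥ ∨ L = ⊤ := by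
  induction h with
  | refl => exact hV
  | step hle hn _ ih =>
    rcases ih hV with h | h
    · left; exact le_bot_iff.1 (h ▸ hle)
    · subst h
      exact Subgroup.Normal.eq_bot_or_eq_top ⟨fun l hl m => hn m trivial l hl⟩

end SN

theorem KL {X A : Type*} [Group X] [Group A] [IsSimpleGroup A] (S : ℕ → Subgroup X)
    (hle : ∀ i, S (i+1) ≤ S i) (hn : ∀ i, ((S (i+1)).subgroupOf (S i)).Normal)
    (hs : ∀ i, IsSimpleGroup (S i ⧸ (S (i+1)).subgroupOf (S i)) ∨ S i = ⊥)
    (L K : Subgroup X) (f : L →* A) (hf : Function.Surjective f)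
    (hk : ∀ x : L, f x = 1 ↔ (x : X) ∈ K) (hL : SN L (S 0)) (n : ℕ) (hnK : S n ≤ K) :
    ∃ i, Nonempty ((S i ⧸ (S (i+1)).subgroupOf (S i)) ≃* A) := by
  classical
  let I : ℕ → Subgroup A := fun i => ((S i).subgroupOf L).map f
  have hS0 : ∀ i, S i ≤ S 0 := fun i => antitone_nat_of_succ_le hle (Nat.zero_le i)
  have hI0 : I 0 = ⊤ := by
    have : (S 0).subgroupOf L = ⊤ := Subgroup.subgroupOf_eq_top.2 hL.le
    simp only [I, this]
    exact Subgroup.map_top_of_surjective f hf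
  have hIn : I n ≠ ⊤ := by
    intro h
    obtain ⟨a, ha⟩ := exists_ne (1 : A)
    have : a ∈ I n := h ▸ trivial
    obtain ⟨x, hx, rfl⟩ := this
    exact ha ((hk x).2 (hnK hx))
  have hex : ∃ i, I i ≠ ⊤ := ⟨n, hIn⟩
  obtain ⟨i, hi, hi'⟩ : ∃ i, I i = ⊤ ∧ I (i+1) ≠ ⊤ := by
    by_contra! hcon
    exact hIn (Nat.rec hI0 (fun i h => hcon i h) n)
  refine ⟨i, ?_⟩
  have hbot : I (i+1) = ⊥ := by
    have hno : (I (i+1)).Normal := by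
      constructor
      rintro _ ⟨l, hl, rfl⟩ a
      have : a ∈ I i := hi ▸ trivial
      obtain ⟨m, hm, rfl⟩ := this
      refine ⟨m * l * m⁻¹, ?_, by simp⟩
      exact (hn i).conj_mem ⟨(l : X), hle i hl⟩ hl ⟨(m : X), hm⟩
    exact hno.eq_bot_or_eq_top.resolve_right hi'
  have hB : IsSimpleGroup (S i ⧸ (S (i+1)).subgroupOf (S i)) := by
    refine (hs i).resolve_right fun h => ?_
    have h2 : S (i+1) = S i := by rw [h]; exact le_bot_iff.1 (h ▸ hle i)
    apply hi'
    simp only [I, h2]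
    exact hi
  have := hn i
  let p : ↥(L ⊓ S i) →* A := f.comp (Subgroup.inclusion inf_le_left)
  let q : ↥(L ⊓ S i) →* (S i ⧸ (S (i+1)).subgroupOf (S i)) :=
    (QuotientGroup.mk' _).comp (Subgroup.inclusion inf_le_right)
  have hp : Function.Surjective p := by
    intro a
    have : a ∈ I i := hi ▸ trivial
    obtain ⟨m, hm, rfl⟩ := this
    exact ⟨⟨m, m.2, hm⟩, rfl⟩
  have hqker : ∀ x, q x = 1 ↔ (x : X) ∈ S (i+1) := by
    intro x
    simp only [q, MonoidHom.comp_apply, QuotientGroup.mk'_apply, QuotientGroup.eq_one_iff]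
    rfl
  have hqp : ∀ x, q x = 1 → p x = 1 := by
    intro x hx
    have : p x ∈ I (i+1) := ⟨⟨x, x.2.1⟩, (hqker x).1 hx, rfl⟩
    rw [hbot] at this
    exact this
  have hq : Function.Surjective q := by
    have h1 : SN (L ⊓ S i) (S i) := by
      have := hL.inf (S i)
      rwa [inf_eq_right.2 (hS0 i)] at this
    have h2 := (h1.comap (S i).subtype).map (QuotientGroup.mk' ((S (i+1)).subgroupOf (S i)))
    have h3 := h2.simple (Or.inr (by
      have : (S i).comap (S i).subtype = ⊤ := Subgroup.subgroupOf_self _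
      rw [this]
      exact Subgroup.map_top_of_surjective _ (QuotientGroup.mk'_surjective _)))
    rcases h3 with h3 | h3
    · exfalso
      apply hIn
      obtain ⟨a, ha⟩ := exists_ne (1 : A)
      obtain ⟨x, rfl⟩ := hp a
      refine absurd (hqp x ?_) ha
      have : q x ∈ (⊥ : Subgroup _) := by
        rw [← h3]
        exact ⟨⟨x, x.2.2⟩, x.2, rfl⟩
      exact this
    · intro b
      have : b ∈ (⊤ : Subgroup _) := trivial
      rw [← h3] at this
      obtain ⟨y, hy, rfl⟩ := this
      exact ⟨⟨y, hy⟩, rfl⟩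
  have hpq : ∀ x, p x = 1 → q x = 1 := by
    have hno : (p.ker.map q).Normal := Subgroup.Normal.map inferInstance q hq
    rcases hno.eq_bot_or_eq_top with h | h
    · intro x hx
      have : q x ∈ p.ker.map q := ⟨x, hx, rfl⟩
      rw [h] at this
      exact this
    · exfalso
      obtain ⟨a, ha⟩ := exists_ne (1 : A)
      obtain ⟨x, rfl⟩ := hp a
      have : q x ∈ p.ker.map q := h ▸ trivial
      obtain ⟨y, hy, hxy⟩ := this
      apply ha
      have h4 := hqp (x * y⁻¹) (by simp [hxy])
      have hy' : p y = 1 := hy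
      simpa [hy'] using h4
  have hker : q.ker = p.ker := by
    ext x; exact ⟨hqp x, hpq x⟩
  exact ⟨(QuotientGroup.quotientKerEquivOfSurjective q hq).symm.trans
    ((QuotientGroup.quotientMulEquivOfEq hker).trans
      (QuotientGroup.quotientKerEquivOfSurjective p hp))⟩

section top
variable {X : Type*} [Group X] [TopologicalSpace X] [IsTopologicalGroup X]

open Pointwise in
/-- van Dantzig -/
theorem exists_compact_open_subgroup [T2Space X] [TotallyDisconnectedSpace X]
    [LocallyCompactSpace X] :
    ∃ U : Subgroup X, IsCompact (U : Set X) ∧ IsOpen (U : Set X) := by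
  obtain ⟨C, hC, hC1⟩ := exists_compact_mem_nhds (1 : X)
  obtain ⟨W, hW, h1W, hWC⟩ :=
    (loc_compact_Haus_tot_disc_of_zero_dim (H := X)).mem_nhds_iff.1 hC1
  have hWc : IsCompact W := hC.of_isClosed_subset hW.1 hWC
  obtain ⟨T, hT, hTW⟩ := compact_open_separated_mul_left hWc hW.2 subset_rfl
  let U : Subgroup X := MulAction.stabilizer X W
  have hUW : (U : Set X) ⊆ W := by
    intro g hg
    have hg' : g • W = W := hg
    rw [← hg']
    exact ⟨1, h1W, by simp⟩
  have hsub : ∀ t ∈ T, t • W ⊆ W := by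
    rintro t ht _ ⟨w, hw, rfl⟩
    exact hTW (Set.mul_mem_mul ht hw)
  have hU : IsOpen (U : Set X) := by
    apply Subgroup.isOpen_of_mem_nhds U (g := 1)
    filter_upwards [hT, inv_mem_nhds_one X hT] with t ht ht'
    change t • W = W
    refine subset_antisymm (hsub t ht) ?_
    have := hsub _ ht'
    rwa [Set.subset_smul_set_iff]
  exact ⟨U, hWc.of_isClosed_subset (Subgroup.isClosed_of_isOpen U hU) hUW, hU⟩

variable [CompactSpace X]

theorem open_of_simple [TotallyDisconnectedSpace X] (K : Subgroup X)
    [hK : K.Normal] (hc : IsClosed (K : Set X)) (hs : IsSimpleGroup (X ⧸ K)) :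
    IsOpen (K : Set X) := by
  obtain ⟨x, hx⟩ : ∃ x, x ∉ K := by
    by_contra! h
    obtain ⟨b, hb⟩ := exists_ne (1 : X ⧸ K)
    obtain ⟨y, rfl⟩ := QuotientGroup.mk_surjective b
    exact hb ((QuotientGroup.eq_one_iff y).2 (h y))
  have ho : IsOpen ((fun y => x⁻¹ * y) ⁻¹' (K : Set X)ᶜ) :=
    hc.isOpen_compl.preimage (by fun_prop)
  obtain ⟨N, hN⟩ := ProfiniteGrp.exist_openNormalSubgroup_sub_open_nhds_of_one ho (by simpa using hx)
  have hno : (N.toSubgroup.map (QuotientGroup.mk' K)).Normal :=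
    Subgroup.Normal.map N.isNormal' _ (QuotientGroup.mk'_surjective _)
  rcases hno.eq_bot_or_eq_top with h | h
  · refine Subgroup.isOpen_mono (H₁ := N.toSubgroup) ?_ N.isOpen'
    intro y hy
    have : (QuotientGroup.mk' K y) ∈ N.toSubgroup.map (QuotientGroup.mk' K) := ⟨y, hy, rfl⟩
    rw [h] at this
    exact (QuotientGroup.eq_one_iff y).1 this
  · exfalso
    have : (QuotientGroup.mk' K x) ∈ N.toSubgroup.map (QuotientGroup.mk' K) := h ▸ trivial
    obtain ⟨y, hy, hxy⟩ := this
    exact hN hy (QuotientGroup.eq.1 hxy.symm)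

theorem series_open [T2Space X] [TotallyDisconnectedSpace X] (S : ProfiniteCompositionSeries X)
    (i : ℕ) : IsOpen (S.H i : Set X) := by
  induction i with
  | zero => rw [S.top_eq]; simp
  | succ i ih =>
    rcases S.step i with ⟨hlt, hs⟩ | h
    · have := S.normal i
      have : CompactSpace (S.H i) := isCompact_iff_compactSpace.1 (S.isClosed i).isCompact
      have := open_of_simple ((S.H (i+1)).subgroupOf (S.H i))
        ((S.isClosed (i+1)).preimage continuous_subtype_val) hs
      have h2 := ih.isOpenMap_subtype_val _ this
      convert h2 using 1
      ext y
      constructor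
      · intro hy; exact ⟨⟨y, S.antitone i hy⟩, hy, rfl⟩
      · rintro ⟨z, hz, rfl⟩; exact hz
    · have : S.H (i+1) = S.H i := by
        rw [h]; exact le_bot_iff.1 (h ▸ S.antitone i)
      rw [this]; exact ih

theorem series_le [T2Space X] (S : ProfiniteCompositionSeries X)
    (K : Subgroup X) (hK : IsOpen (K : Set X)) : ∃ n, S.H n ≤ K := by
  have hanti : Antitone S.H := antitone_nat_of_succ_le S.antitone
  obtain ⟨n, hn⟩ := exists_subset_nhds_of_isCompact (V := fun i => (S.H i : Set X)) (U := (K : Set X))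
    (directed_of_isDirected_le fun i j h => hanti h) (fun i => (S.isClosed i).isCompact) (by
      intro x hx
      have : x ∈ (⨅ i, S.H i) := by
        rw [Subgroup.mem_iInf]; exact fun i => Set.mem_iInter.1 hx i
      rw [S.iInf_eq_bot] at this
      rw [Subgroup.mem_bot.1 this]
      exact hK.mem_nhds K.one_mem)
  exact ⟨n, hn⟩

/-- one refinement step -/
theorem next_step (N : ℕ → Subgroup X) (hN : ∀ k, (N k).Normal)
    (hNo : ∀ k, IsOpen (N k : Set X)) (hNb : ⨅ k, N k = ⊥) (H : Subgroup X)
    (hH : IsOpen (H : Set X)) :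
    ∃ H' : Subgroup X, IsOpen (H' : Set X) ∧ H' ≤ H ∧
      ∃ hn : (H'.subgroupOf H).Normal,
      ((H' < H ∧ IsSimpleGroup (H ⧸ H'.subgroupOf H)) ∨ H = ⊥) ∧
      ∀ k, (∀ j < k, H ≤ N j) → ¬ H ≤ N k → H' < H ∧ H ⊓ N k ≤ H' := by
  classical
  by_cases hb : H = ⊥
  · subst hb
    refine ⟨⊥, hH, le_rfl, ?_, Or.inr rfl, fun k _ h => absurd bot_le h⟩
    rw [Subgroup.subgroupOf_self]; infer_instance
  have hex : ∃ k, ¬ H ≤ N k := by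
    by_contra! h
    exact hb (le_bot_iff.1 (hNb ▸ le_iInf h))
  let k := Nat.find hex
  have hk : ¬ H ≤ N k := Nat.find_spec hex
  let D : Subgroup H := (N k).subgroupOf H
  have := hN k
  have : Finite (X ⧸ N k) := Subgroup.quotient_finite_of_isOpen _ (hNo k)
  have : (N k).FiniteIndex := Subgroup.finiteIndex_of_finite_quotient
  have : D.FiniteIndex := inferInstanceAs ((N k).subgroupOf H).FiniteIndex
  let P : ℕ → Prop := fun m => ∃ M : Subgroup H, M.Normal ∧ D ≤ M ∧ M ≠ ⊤ ∧ M.index = m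
  have hP : ∃ m, P m := ⟨D.index, D, inferInstance, le_rfl,
    fun h => hk (Subgroup.subgroupOf_eq_top.1 h), rfl⟩
  obtain ⟨M, hM, hDM, hMt, hMi⟩ := Nat.find_spec hP
  have hmin : ∀ M' : Subgroup H, M'.Normal → M ≤ M' → M' ≠ ⊤ → M' = M := by
    intro M' h1 h2 h3
    by_contra hne
    have : M.FiniteIndex := Subgroup.finiteIndex_of_le hDM
    have hlt : M'.index < M.index := Subgroup.index_strictAnti (lt_of_le_of_ne h2 (Ne.symm hne))
    exact Nat.find_min hP (hMi ▸ hlt) ⟨M', h1, hDM.trans h2, h3, rfl⟩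
  have hsub : (M.map H.subtype).subgroupOf H = M := by
    ext x; simp [Subgroup.mem_subgroupOf]
  have hn : ((M.map H.subtype).subgroupOf H).Normal := by rw [hsub]; exact hM
  have hlt : M.map H.subtype < H := by
    refine lt_of_le_of_ne (Subgroup.map_subtype_le M) fun h => hMt ?_
    rw [← hsub, h, Subgroup.subgroupOf_self]
  have hle : H ⊓ N k ≤ M.map H.subtype := by
    intro x hx
    exact ⟨⟨x, hx.1⟩, hDM hx.2, rfl⟩
  refine ⟨M.map H.subtype, ?_, hlt.le, hn, Or.inl ⟨hlt, ?_⟩, ?_⟩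
  · exact Subgroup.isOpen_mono hle (hH.inter (hNo k))
  · generalize M.map H.subtype = M' at *
    subst hsub
    refine @IsSimpleGroup.mk _ _ ?_ ?_
    · obtain ⟨x, hx⟩ : ∃ x, x ∉ M'.subgroupOf H := by
        by_contra! h
        exact hMt (eq_top_iff.2 fun x _ => h x)
      exact ⟨⟨QuotientGroup.mk x, 1, fun h => hx ((QuotientGroup.eq_one_iff x).1 h)⟩⟩
    · intro Q hQ
      by_cases ht : Q.comap (QuotientGroup.mk' (M'.subgroupOf H)) = ⊤
      · right
        rw [eq_top_iff]
        intro b _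
        obtain ⟨y, rfl⟩ := QuotientGroup.mk'_surjective _ b
        have : y ∈ Q.comap (QuotientGroup.mk' (M'.subgroupOf H)) := ht ▸ trivial
        exact this
      · left
        have h5 := hmin _ (hQ.comap _) (by
          intro y hy
          have : QuotientGroup.mk' (M'.subgroupOf H) y = 1 := (QuotientGroup.eq_one_iff y).2 hy
          rw [Subgroup.mem_comap, this]; exact Q.one_mem) ht
        rw [eq_bot_iff]
        intro b hb
        obtain ⟨y, rfl⟩ := QuotientGroup.mk'_surjective _ b
        have : y ∈ Q.comap (QuotientGroup.mk' (M'.subgroupOf H)) := hb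
        rw [h5] at this
        exact (QuotientGroup.eq_one_iff y).2 this
  · intro k' h1 h2
    have : k' = k := by
      apply le_antisymm
      · by_contra! h
        exact hk (h1 k h)
      · exact Nat.find_min' hex h2
    subst this
    exact ⟨hlt, hle⟩

theorem exists_series [T2Space X] [TotallyDisconnectedSpace X] [FirstCountableTopology X] :
    Nonempty (ProfiniteCompositionSeries X) := by
  obtain ⟨B, hB⟩ := (𝓝 (1 : X)).exists_antitone_basis
  have h1 : ∀ k, ∃ N : OpenNormalSubgroup X, (N : Set X) ⊆ B k := by
    intro k
    obtain ⟨O, hO, hOo, hO1⟩ := mem_nhds_iff.1 (hB.1.mem_of_mem (i := k) trivial)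
    obtain ⟨N, hN⟩ := ProfiniteGrp.exist_openNormalSubgroup_sub_open_nhds_of_one hOo hO1
    exact ⟨N, hN.trans hO⟩
  choose N0 hN0 using h1
  let N : ℕ → Subgroup X := fun k => (N0 k).toSubgroup
  have hN : ∀ k, (N k).Normal := fun k => (N0 k).isNormal'
  have hNo : ∀ k, IsOpen (N k : Set X) := fun k => (N0 k).isOpen'
  have hNb : ⨅ k, N k = ⊥ := by
    rw [eq_bot_iff]
    intro x hx
    rw [Subgroup.mem_iInf] at hx
    by_contra hne
    obtain ⟨k, -, hk⟩ := hB.1.mem_iff.1 (compl_singleton_mem_nhds (Ne.symm hne : (1:X) ≠ x))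
    exact hk (hN0 k (hx k)) rfl
  choose nxt hop hle hnm hst hconv using next_step N hN hNo hNb
  let F : ℕ → {H : Subgroup X // IsOpen (H : Set X)} := fun n =>
    Nat.rec ⟨⊤, by simp⟩ (fun _ H => ⟨nxt H.1 H.2, hop H.1 H.2⟩) n
  have hanti : Antitone fun i => (F i).1 := antitone_nat_of_succ_le fun i => hle _ _
  have key : ∀ k, ∃ i, ∀ j < k, (F i).1 ≤ N j := by
    intro k
    induction k with
    | zero => exact ⟨0, by simp⟩
    | succ k ih =>
      obtain ⟨i0, hi0⟩ := ih
      suffices h : ∃ i, (F (i0 + i)).1 ≤ N k by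
        obtain ⟨i, hi⟩ := h
        refine ⟨i0 + i, fun j hj => ?_⟩
        rcases Nat.lt_succ_iff_lt_or_eq.1 hj with h | rfl
        · exact (hanti (Nat.le_add_right i0 i)).trans (hi0 j h)
        · exact hi
      by_contra! hcon
      have : Finite (X ⧸ N k) := Subgroup.quotient_finite_of_isOpen _ (hNo k)
      have : (N k).FiniteIndex := Subgroup.finiteIndex_of_finite_quotient
      have hdec : ∀ i, (N k).relIndex (F (i0 + i + 1)).1 < (N k).relIndex (F (i0 + i)).1 := by
        intro i
        obtain ⟨ha, hb⟩ := hconv (F (i0+i)).1 (F (i0+i)).2 k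
          (fun j hj => (hanti (Nat.le_add_right i0 i)).trans (hi0 j hj)) (hcon i)
        change (F (i0+i+1)).1 < _ at ha
        change _ ≤ (F (i0+i+1)).1 at hb
        generalize (F (i0+i+1)).1 = H' at *
        generalize (F (i0+i)).1 = H at *
        have e1 : (N k).relIndex H' = (H ⊓ N k).relIndex H' := by
          rw [← Subgroup.inf_relIndex_right (N k) H', ← Subgroup.inf_relIndex_right (H ⊓ N k) H']
          congr 1
          apply le_antisymm
          · exact le_inf (le_inf (inf_le_right.trans ha.le) inf_le_left) inf_le_right
          · exact le_inf (inf_le_left.trans inf_le_right) inf_le_right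
        have e2 : (N k).relIndex H = (H ⊓ N k).relIndex H := by
          rw [← Subgroup.inf_relIndex_right (N k) H, inf_comm]
        have e3 := Subgroup.relIndex_mul_relIndex (H ⊓ N k) H' H hb ha.le
        have e4 : (N k).relIndex H ≠ 0 := (inferInstance : ((N k).subgroupOf H).FiniteIndex).index_ne_zero
        have e5 : H'.relIndex H ≠ 1 := fun h => ha.not_ge (Subgroup.relIndex_eq_one.1 h)
        rw [e1]
        rw [e2] at e4 ⊢
        rw [← e3] at e4 ⊢
        have e6 := mul_ne_zero_iff.1 e4
        exact lt_mul_of_one_lt_right (Nat.pos_of_ne_zero e6.1) (by omega)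
      have hd : ∀ i, (N k).relIndex (F (i0 + i)).1 + i ≤ (N k).relIndex (F i0).1 := by
        intro i
        induction i with
        | zero => simp
        | succ i ih =>
          have := hdec i
          rw [← add_assoc i0]
          omega
      have := hd ((N k).relIndex (F i0).1 + 1)
      omega
  refine ⟨⟨fun i => (F i).1, rfl, fun i => Subgroup.isClosed_of_isOpen _ (F i).2,
    fun i => hle _ _, ?_, fun i => hnm _ _, fun i => hst _ _⟩⟩
  rw [eq_bot_iff, ← hNb]
  refine le_iInf fun k => ?_
  obtain ⟨i, hi⟩ := key (k+1)
  exact (iInf_le _ i).trans (hi k (Nat.lt_succ_self k))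

end top

section main
variable {G : Type*} [Group G] [TopologicalSpace G] [IsTopologicalGroup G]

/-- an open section isomorphic to `A` -/
def Fac {G : Type*} [Group G] [TopologicalSpace G] (L : Subgroup G) (A : Type*) [Group A] : Prop :=
  ∃ (K : Subgroup G) (f : L →* A), IsOpen (K : Set G) ∧ Function.Surjective f ∧
    ∀ x, f x = 1 ↔ (x : G) ∈ K

def QA (U : Subgroup G) (A : Type*) [Group A] : Prop :=
  ∀ W : Subgroup G, IsOpen (W : Set G) → ∃ L, L ≤ W ∧ SN L U ∧ Fac L A

lemma map_open (U : Subgroup G) (hU : IsOpen (U : Set G)) (H : Subgroup U)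
    (hH : IsOpen (H : Set U)) : IsOpen (H.map U.subtype : Set G) :=
  hU.isOpenMap_subtype_val _ hH

lemma series_SN {X : Type*} [Group X] [TopologicalSpace X] (S : ProfiniteCompositionSeries X)
    (i : ℕ) : SN (S.H i) ⊤ := by
  induction i with
  | zero => rw [S.top_eq]; exact .refl _
  | succ i ih =>
    refine .step (S.antitone i) ?_ ih
    intro m hm l hl
    exact (S.normal i).conj_mem ⟨l, S.antitone i hl⟩ hl ⟨m, hm⟩

lemma series_fac [T2Space G] [TotallyDisconnectedSpace G] (U : Subgroup G)
    (hc : IsCompact (U : Set G)) (hU : IsOpen (U : Set G)) (A : Type*) [Group A]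
    (S : ProfiniteCompositionSeries U) (i : ℕ) (h : Nonempty (S.factor i ≃* A)) :
    SN ((S.H i).map U.subtype) U ∧ Fac ((S.H i).map U.subtype) A := by
  have : CompactSpace U := isCompact_iff_compactSpace.1 hc
  constructor
  · have := (series_SN S i).map U.subtype
    rwa [← MonoidHom.range_eq_map, Subgroup.range_subtype] at this
  · obtain ⟨e⟩ := h
    have := S.normal i
    let e1 : S.H i ≃* (S.H i).map U.subtype :=
      (S.H i).equivMapOfInjective U.subtype U.subtype_injective
    let pr : S.H i →* S.factor i := QuotientGroup.mk' ((S.H (i+1)).subgroupOf (S.H i))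
    have hpr : Function.Surjective pr := QuotientGroup.mk'_surjective _
    have hprk : ∀ y, pr y = 1 ↔ (y : U) ∈ S.H (i+1) := fun y => QuotientGroup.eq_one_iff y
    refine ⟨(S.H (i+1)).map U.subtype, (e.toMonoidHom.comp pr).comp e1.symm.toMonoidHom,
      map_open U hU _ (series_open S (i+1)), ?_, ?_⟩
    · exact (e.surjective.comp hpr).comp e1.symm.surjective
    · intro x
      obtain ⟨y, rfl⟩ := e1.surjective x
      have : (e1 y : G) = ((y : U) : G) := rfl
      simp [hprk, this]

lemma inf_QA [T2Space G] [TotallyDisconnectedSpace G] (U : Subgroup G)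
    (hc : IsCompact (U : Set G)) (hU : IsOpen (U : Set G)) (A : Type*) [Group A]
    (h : HasInfiniteMultiplicity U A) : QA U A := by
  have : CompactSpace U := isCompact_iff_compactSpace.1 hc
  obtain ⟨S, hS⟩ := h
  intro W hW
  obtain ⟨n, hn⟩ := series_le S (W.subgroupOf U) (hW.preimage continuous_subtype_val)
  obtain ⟨i, hi, hni⟩ := hS.exists_gt n
  obtain ⟨h1, h2⟩ := series_fac U hc hU A S i hi.2
  refine ⟨_, ?_, h1, h2⟩
  rintro _ ⟨x, hx, rfl⟩
  exact hn (antitone_nat_of_succ_le S.antitone hni.le hx)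

lemma QA_trans [T2Space G] [TotallyDisconnectedSpace G] (U V : Subgroup G)
    (hU : IsOpen (U : Set G)) (hc : IsCompact (V : Set G)) (hV : IsOpen (V : Set G))
    (A : Type*) [Group A] (h : QA U A) : QA V A := by
  have : CompactSpace V := isCompact_iff_compactSpace.1 hc
  intro W hW
  obtain ⟨N, hN⟩ := ProfiniteGrp.exist_openNormalSubgroup_sub_open_nhds_of_one (G := V)
    (U := ((U ⊓ W).subgroupOf V : Subgroup V)) ((hU.inter hW).preimage continuous_subtype_val)
    (Subgroup.one_mem _)
  let M : Subgroup G := N.toSubgroup.map V.subtype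
  have hM : M ≤ U ⊓ W := by
    rintro _ ⟨x, hx, rfl⟩
    exact hN hx
  obtain ⟨L, hLM, hLU, hF⟩ := h M (map_open V hV _ N.isOpen')
  refine ⟨L, hLM.trans (hM.trans inf_le_right), ?_, hF⟩
  have h1 := hLU.inf M
  rw [inf_eq_left.2 hLM, inf_eq_right.2 (hM.trans inf_le_left)] at h1
  refine h1.trans (.step (Subgroup.map_subtype_le _) ?_ (.refl V))
  rintro m hm _ ⟨l, hl, rfl⟩
  exact ⟨_, N.isNormal'.conj_mem l hl ⟨m, hm⟩, rfl⟩

lemma occurs [T2Space G] [TotallyDisconnectedSpace G] (V : Subgroup G)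
    (hc : IsCompact (V : Set G)) (A : Type*) [Group A] [IsSimpleGroup A]
    (S : ProfiniteCompositionSeries V) (n : ℕ) (L : Subgroup G)
    (hL : SN L ((S.H n).map V.subtype)) (hF : Fac L A) :
    ∃ i, n ≤ i ∧ S.H (i+1) < S.H i ∧ Nonempty (S.factor i ≃* A) := by
  have : CompactSpace V := isCompact_iff_compactSpace.1 hc
  obtain ⟨K, f, hK, hf, hfK⟩ := hF
  have hLV : L ≤ V := hL.le.trans (Subgroup.map_subtype_le _)
  obtain ⟨m, hm⟩ := series_le S (K.subgroupOf V) (hK.preimage continuous_subtype_val)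
  have hSN : SN (L.subgroupOf V) (S.H n) := by
    have := hL.comap V.subtype
    rwa [Subgroup.comap_map_eq_self_of_injective V.subtype_injective] at this
  let e : L.subgroupOf V ≃* L := Subgroup.subgroupOfEquivOfLe hLV
  obtain ⟨i, ⟨g⟩⟩ := KL (A := A) (fun i => S.H (n + i)) (fun i => S.antitone _) (fun i => S.normal _)
    (fun i => (S.step (n+i)).imp And.right id) (L.subgroupOf V) (K.subgroupOf V)
    (f.comp e.toMonoidHom) (hf.comp e.surjective)
    (fun x => hfK (e x)) hSN m
    ((antitone_nat_of_succ_le S.antitone (Nat.le_add_left m n)).trans hm)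
  have hg : Nonempty (S.factor (n+i) ≃* A) := ⟨g⟩
  refine ⟨n + i, Nat.le_add_right _ _, ?_, hg⟩
  rcases S.step (n+i) with h | h
  · exact h.1
  · exfalso
    obtain ⟨a, ha⟩ := exists_ne (1 : A)
    obtain ⟨b, rfl⟩ := hg.some.surjective a
    apply ha
    have : b = 1 := by
      have := S.normal (n+i)
      obtain ⟨y, rfl⟩ := QuotientGroup.mk'_surjective ((S.H (n+i+1)).subgroupOf (S.H (n+i))) b
      refine (QuotientGroup.eq_one_iff y).2 ?_
      have hy : (y : V) = 1 := by
        exact Subgroup.mem_bot.1 (h.le y.2)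
      have hy' : y = 1 := Subtype.ext hy
      rw [hy']
      exact Subgroup.one_mem _
    rw [this, map_one]

lemma QA_inf [T2Space G] [TotallyDisconnectedSpace G] (V : Subgroup G)
    (hc : IsCompact (V : Set G)) (hV : IsOpen (V : Set G)) (A : Type*) [Group A] [IsSimpleGroup A]
    (h : QA V A) (S : ProfiniteCompositionSeries V) :
    {i : ℕ | S.H (i + 1) < S.H i ∧ Nonempty (S.factor i ≃* A)}.Infinite := by
  have : CompactSpace V := isCompact_iff_compactSpace.1 hc
  refine Set.infinite_of_forall_exists_gt fun n => ?_
  obtain ⟨L, hLW, hLV, hF⟩ := h ((S.H (n+1)).map V.subtype) (map_open V hV _ (series_open S _))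
  have h1 := hLV.inf ((S.H (n+1)).map V.subtype)
  rw [inf_eq_left.2 hLW, inf_eq_right.2 (Subgroup.map_subtype_le _)] at h1
  obtain ⟨i, hi, h2⟩ := occurs V hc A S (n+1) L h1 hF
  exact ⟨i, h2, hi⟩

end main

theorem local_simple_content_equivalences (G : Type*) [Group G] [TopologicalSpace G]
    [IsTopologicalGroup G] [T2Space G] [TotallyDisconnectedSpace G] [LocallyCompactSpace G]
    [SecondCountableTopology G] (hnd : ¬ DiscreteTopology G)
    (A : Type*) [Group A] [Finite A] [IsSimpleGroup A] :
    ((∀ U : Subgroup G, IsCompact (U : Set G) → IsOpen (U : Set G) →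
        IsCompositionFactor ↥U A) ↔
      (∃ U : Subgroup G, IsCompact (U : Set G) ∧ IsOpen (U : Set G) ∧
        HasInfiniteMultiplicity ↥U A)) ∧
    ((∃ U : Subgroup G, IsCompact (U : Set G) ∧ IsOpen (U : Set G) ∧
        HasInfiniteMultiplicity ↥U A) ↔
      (∀ U : Subgroup G, IsCompact (U : Set G) → IsOpen (U : Set G) →
        HasInfiniteMultiplicity ↥U A)) := by
  obtain ⟨U, hUc, hUo⟩ := exists_compact_open_subgroup (X := G)
  have h23 : (∃ U : Subgroup G, IsCompact (U : Set G) ∧ IsOpen (U : Set G) ∧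
        HasInfiniteMultiplicity ↥U A) → (∀ U : Subgroup G, IsCompact (U : Set G) →
        IsOpen (U : Set G) → HasInfiniteMultiplicity ↥U A) := by
    rintro ⟨U, hUc, hUo, hU⟩ V hVc hVo
    have : CompactSpace V := isCompact_iff_compactSpace.1 hVc
    have : SecondCountableTopology V :=
      inferInstanceAs (SecondCountableTopology (V : Set G))
    have : FirstCountableTopology V := inferInstance
    obtain ⟨S⟩ := exists_series (X := V)
    exact ⟨S, QA_inf V hVc hVo A (QA_trans U V hUo hVc hVo A (inf_QA U hUc hUo A hU)) S⟩
  refine ⟨⟨fun h1 => ⟨U, hUc, hUo, ?_⟩, fun h2 V hVc hVo => ?_⟩, h23,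
    fun h3 => ⟨U, hUc, hUo, h3 U hUc hUo⟩⟩
  · have : CompactSpace U := isCompact_iff_compactSpace.1 hUc
    obtain ⟨S, -⟩ := h1 U hUc hUo
    refine ⟨S, Set.infinite_of_forall_exists_gt fun n => ?_⟩
    have hVo := map_open U hUo _ (series_open S (n+1))
    have hVc : IsCompact ((S.H (n+1)).map U.subtype : Set G) :=
      (S.isClosed (n+1)).isCompact.image continuous_subtype_val
    obtain ⟨T, j, -, hj⟩ := h1 _ hVc hVo
    obtain ⟨hL, hF⟩ := series_fac _ hVc hVo A T j hj
    obtain ⟨i, hi, h2⟩ := occurs U hUc A S (n+1) _ hL hF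
    exact ⟨i, h2, hi⟩
  · obtain ⟨S, hS⟩ := h23 h2 V hVc hVo
    obtain ⟨i, hi⟩ := hS.nonempty
    exact ⟨S, i, hi⟩
end

section
/- Let G be a second countable t.d.l.c. group acting faithfully, vertex-transitively and with compact open vertex stabilizers on a connected, locally finite simple graph Γ of degree d (so Γ is a Cayley–Abels graph for G and the action has trivial kernel). Fix a vertex α and let L be the local action of G on Γ, i.e., the image of the stabilizer G_α in the symmetric group on the d neighbours of α. If a finite simple group A is a composition factor of every compact open subgroup of G, then there exist a neighbour β of α and subgroups N ⊴ H ≤ L_β (where L_β is the stabilizer of β in L) with H/N ≅ A; in particular, A is isomorphic to a subquotient of the symmetric group on d − 1 letters. -/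
/-- A Cayley–Abels graph for a topological group `G`. -/
def IsCayleyAbels {G V : Type*} [Group G] [TopologicalSpace G]
    (Γ : SimpleGraph V) (ρ : G →* Equiv.Perm V) : Prop :=
  Γ.Connected ∧ (∀ v : V, (Γ.neighborSet v).Finite) ∧
    (∀ (g : G) (u v : V), Γ.Adj u v → Γ.Adj (ρ g u) (ρ g v)) ∧
    (∀ u v : V, ∃ g : G, ρ g u = v) ∧
    (∀ v : V, IsCompact {g : G | ρ g v = v} ∧ IsOpen {g : G | ρ g v = v})

/-- The permutation of the neighbours of `α` induced by an element `g` fixing `α`. -/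
def localPerm {G V : Type*} [Group G] (Γ : SimpleGraph V) (ρ : G →* Equiv.Perm V)
    (hpres : ∀ (g : G) (u v : V), Γ.Adj u v → Γ.Adj (ρ g u) (ρ g v))
    (α : V) (g : G) (hg : ρ g α = α) : Equiv.Perm (Γ.neighborSet α) :=
  (ρ g).subtypePerm (fun v => by
    symm
    constructor
    · intro hv
      have h := hpres g α v hv
      rwa [hg] at h
    · intro hv
      have h := hpres g⁻¹ α (ρ g v) hv
      rw [map_inv] at h
      have hα : (ρ g)⁻¹ α = α := by
        conv_lhs => rw [← hg]
        exact Equiv.symm_apply_apply _ _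
      rwa [hα, show (ρ g)⁻¹ (ρ g v) = v from Equiv.symm_apply_apply _ _] at h)

/-- The local action of `G` at the vertex `α`: the subgroup of the symmetric group on the
neighbours of `α` induced by the stabilizer of `α`. -/
def localAction {G V : Type*} [Group G] (Γ : SimpleGraph V) (ρ : G →* Equiv.Perm V)
    (hpres : ∀ (g : G) (u v : V), Γ.Adj u v → Γ.Adj (ρ g u) (ρ g v))
    (α : V) : Subgroup (Equiv.Perm (Γ.neighborSet α)) where
  carrier := {σ | ∃ (g : G) (hg : ρ g α = α), σ = localPerm Γ ρ hpres α g hg}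
  one_mem' := by
    refine ⟨1, by simp, ?_⟩
    ext x
    simp [localPerm]
  mul_mem' := by
    rintro σ τ ⟨g, hg, rfl⟩ ⟨h, hh, rfl⟩
    refine ⟨g * h, by simp [hg, hh], ?_⟩
    ext x
    simp [localPerm]
    rfl
  inv_mem' := by
    rintro σ ⟨g, hg, rfl⟩
    have hginv : ρ g⁻¹ α = α := by
      rw [map_inv]
      conv_lhs => rw [← hg]
      exact Equiv.symm_apply_apply _ _
    refine ⟨g⁻¹, hginv, ?_⟩
    ext x
    simp [localPerm, map_inv]


/-- Connected vertex sets grown from `α`. -/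
inductive GoodSet {V : Type*} (Γ : SimpleGraph V) (α : V) : Set V → Prop
  | base : GoodSet Γ α {α}
  | step (X : Set V) (v x : V) : GoodSet Γ α X → x ∈ X → Γ.Adj x v → GoodSet Γ α (insert v X)

theorem GoodSet.mem {V : Type*} {Γ : SimpleGraph V} {α : V} {X : Set V} (h : GoodSet Γ α X) :
    α ∈ X := by
  induction h with
  | base => simp
  | step X v x _ _ _ ih => exact Set.mem_insert_of_mem _ ih

theorem GoodSet.extend {V : Type*} {Γ : SimpleGraph V} (hc : Γ.Connected) {α : V} {X : Set V}
    (h : GoodSet Γ α X) (v : V) : ∃ Y, GoodSet Γ α Y ∧ X ⊆ Y ∧ v ∈ Y := by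
  have hr : Relation.ReflTransGen Γ.Adj α v :=
    (SimpleGraph.reachable_iff_reflTransGen α v).1 (hc.preconnected α v)
  induction hr with
  | refl => exact ⟨X, h, le_rfl, h.mem⟩
  | tail _ hbc ih =>
    obtain ⟨Y, hY, hXY, hb⟩ := ih
    exact ⟨_, GoodSet.step Y _ _ hY hb hbc, hXY.trans (Set.subset_insert _ _),
      Set.mem_insert _ _⟩

theorem GoodSet.cover {V : Type*} {Γ : SimpleGraph V} (hc : Γ.Connected) (α : V) (T : Finset V) :
    ∃ Y, GoodSet Γ α Y ∧ (T : Set V) ⊆ Y := by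
  classical
  induction T using Finset.induction_on with
  | empty => exact ⟨_, GoodSet.base, by simp⟩
  | insert v T _ ih =>
    obtain ⟨Y, hY, hTY⟩ := ih
    obtain ⟨Z, hZ, hYZ, hv⟩ := hY.extend hc v
    refine ⟨Z, hZ, ?_⟩
    rw [Finset.coe_insert]
    exact Set.insert_subset hv (hTY.trans hYZ)

/-- Elements fixing pointwise the closed 1-neighbourhood of `X`. -/
def fixSub {P V : Type*} [Group P] (Γ : SimpleGraph V) (σ : P →* Equiv.Perm V) (X : Set V) :
    Subgroup P where
  carrier := {p | ∀ x ∈ X, ∀ y, (y = x ∨ Γ.Adj x y) → σ p y = y}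
  one_mem' := by intro x _ y _; simp
  mul_mem' := by
    intro a b ha hb x hx y hy
    rw [map_mul, Equiv.Perm.mul_apply, hb x hx y hy, ha x hx y hy]
  inv_mem' := by
    intro a ha x hx y hy
    rw [map_inv, Equiv.Perm.inv_eq_iff_eq, ha x hx y hy]

theorem fixSub_dichotomy {P V A : Type*} [Group P] [Group A] [IsSimpleGroup A]
    (Γ : SimpleGraph V) (σ : P →* Equiv.Perm V)
    (hpres : ∀ (g : P) (u v : V), Γ.Adj u v → Γ.Adj (σ g u) (σ g v))
    (f : P →* A) (hf : Function.Surjective f) (α : V) (h0 : fixSub Γ σ {α} = ⊤)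
    (X : Set V) (hX : GoodSet Γ α X) :
    (∃ (v w : V) (Q : Subgroup P), Γ.Adj v w ∧ (∀ q ∈ Q, σ q v = v ∧ σ q w = w) ∧
      Q.map f = ⊤ ∧ ∀ q ∈ Q, (∀ y, Γ.Adj v y → σ q y = y) → f q = 1) ∨
    (fixSub Γ σ X).map f = ⊤ := by
  induction hX with
  | base =>
    right
    rw [h0, ← MonoidHom.range_eq_map]
    exact MonoidHom.range_eq_top.2 hf
  | step X v x hX hx hadj ih =>
    rcases ih with ih | ih
    · exact Or.inl ih
    have hn : ((fixSub Γ σ (insert v X)).map f).Normal := by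
      constructor
      rintro _ ⟨r, hr, rfl⟩ a
      have ha : a ∈ (fixSub Γ σ X).map f := by rw [ih]; trivial
      obtain ⟨q, hq, rfl⟩ := ha
      refine ⟨q * r * q⁻¹, ?_, by simp⟩
      have hrX : r ∈ fixSub Γ σ X := fun x hx y hy => hr x (Set.mem_insert_of_mem _ hx) y hy
      rintro z (rfl | hz) y hy
      · have hqz : σ q⁻¹ z = z := (inv_mem hq : q⁻¹ ∈ fixSub Γ σ X) x hx z (Or.inr hadj)
        have h1 : σ q⁻¹ y = z ∨ Γ.Adj z (σ q⁻¹ y) := by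
          rcases hy with rfl | hy
          · exact Or.inl hqz
          · right
            have := hpres q⁻¹ z y hy
            rwa [hqz] at this
        have h2 := hr z (Set.mem_insert _ _) _ h1
        rw [map_mul, map_mul, Equiv.Perm.mul_apply, Equiv.Perm.mul_apply, h2, map_inv]
        exact Equiv.apply_symm_apply _ _
      · exact (mul_mem (mul_mem hq hrX) (inv_mem hq) : q * r * q⁻¹ ∈ fixSub Γ σ X) z hz y hy
    rcases hn.eq_bot_or_eq_top with hb | ht
    · left
      refine ⟨v, x, fixSub Γ σ X, hadj.symm, fun q hq => ⟨hq x hx v (Or.inr hadj),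
        hq x hx x (Or.inl rfl)⟩, ih, ?_⟩
      intro q hq hqv
      have : f q ∈ (fixSub Γ σ (insert v X)).map f := by
        refine ⟨q, ?_, rfl⟩
        rintro z (rfl | hz) y hy
        · rcases hy with rfl | hy
          · exact hq x hx y (Or.inr hadj)
          · exact hqv y hy
        · exact hq z hz y hy
      rw [hb] at this
      exact this
    · exact Or.inr ht

theorem exists_local_section {P V A : Type*} [Group P] [TopologicalSpace P] [CompactSpace P]
    [Group A] [IsSimpleGroup A]
    (Γ : SimpleGraph V) (hc : Γ.Connected) (σ : P →* Equiv.Perm V)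
    (hpres : ∀ (g : P) (u v : V), Γ.Adj u v → Γ.Adj (σ g u) (σ g v))
    (hclosed : ∀ v : V, IsClosed {p : P | σ p v = v})
    (hfaith : ∀ p : P, (∀ v, σ p v = v) → p = 1)
    (f : P →* A) (hf : Function.Surjective f) (hker : IsOpen (f.ker : Set P))
    (α : V) (h0 : fixSub Γ σ {α} = ⊤) :
    ∃ (v w : V) (Q : Subgroup P), Γ.Adj v w ∧ (∀ q ∈ Q, σ q v = v ∧ σ q w = w) ∧
      Q.map f = ⊤ ∧ ∀ q ∈ Q, (∀ y, Γ.Adj v y → σ q y = y) → f q = 1 := by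
  have hcomp : IsCompact ((f.ker : Set P)ᶜ) := hker.isClosed_compl.isCompact
  obtain ⟨T, hT⟩ := hcomp.elim_finite_subfamily_closed (fun v => {p : P | σ p v = v}) hclosed
    (by
      rw [Set.eq_empty_iff_forall_notMem]
      rintro p ⟨hp, hp'⟩
      apply hp
      have : p = 1 := hfaith p (fun v => Set.mem_iInter.1 hp' v)
      rw [this]
      exact one_mem _)
  obtain ⟨X, hX, hTX⟩ := GoodSet.cover hc α T
  rcases fixSub_dichotomy Γ σ hpres f hf α h0 X hX with h | h
  · exact h
  exfalso
  obtain ⟨a, ha⟩ := exists_ne (1 : A)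
  have : a ∈ (fixSub Γ σ X).map f := by rw [h]; trivial
  obtain ⟨p, hp, rfl⟩ := this
  have : p ∈ (f.ker : Set P)ᶜ ∩ ⋂ i ∈ T, {p : P | σ p i = i} := by
    refine ⟨fun hk => ha hk, ?_⟩
    simp only [Set.mem_iInter]
    intro i hi
    exact hp i (hTX hi) i (Or.inl rfl)
  rw [hT] at this
  exact this

theorem subquot_of_hom {Q E A : Type*} [Group Q] [Group E] [Group A] (ψ : Q →* E) (f : Q →* A)
    (hf : Function.Surjective f) (hk : ψ.ker ≤ f.ker) :
    ∃ (H N : Subgroup E) (_ : N ≤ H) (hn : (N.subgroupOf H).Normal), H = ψ.range ∧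
      Nonempty (letI := hn; (↥H ⧸ N.subgroupOf H) ≃* A) := by
  let g : ψ.range →* A :=
    (QuotientGroup.lift ψ.ker f hk).comp (QuotientGroup.quotientKerEquivRange ψ).symm.toMonoidHom
  have hg : Function.Surjective g := by
    intro a
    obtain ⟨q, rfl⟩ := hf a
    refine ⟨QuotientGroup.quotientKerEquivRange ψ (q : Q ⧸ ψ.ker), ?_⟩
    simp [g]
  have hN : (g.ker.map ψ.range.subtype).subgroupOf ψ.range = g.ker :=
    Subgroup.comap_map_eq_self_of_injective ψ.range.subtype_injective _
  have hn : ((g.ker.map ψ.range.subtype).subgroupOf ψ.range).Normal := by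
    rw [hN]; infer_instance
  refine ⟨ψ.range, g.ker.map ψ.range.subtype, Subgroup.map_subtype_le _, hn, rfl, ?_⟩
  exact ⟨(QuotientGroup.quotientMulEquivOfEq hN).trans
    (QuotientGroup.quotientKerEquivOfSurjective g hg)⟩

theorem subquot_main {P V A : Type*} [Group P] [TopologicalSpace P] [CompactSpace P]
    [Group A] [IsSimpleGroup A] {G : Type*} [Group G]
    (Γ : SimpleGraph V) (hc : Γ.Connected) (ρ : G →* Equiv.Perm V)
    (htrans : ∀ u v : V, ∃ g : G, ρ g u = v)
    (hpres : ∀ (g : G) (u v : V), Γ.Adj u v → Γ.Adj (ρ g u) (ρ g v))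
    (j : P →* G)
    (hclosed : ∀ v : V, IsClosed {p : P | ρ (j p) v = v})
    (hfaith : ∀ p : P, (∀ v, ρ (j p) v = v) → p = 1)
    (f : P →* A) (hf : Function.Surjective f) (hker : IsOpen (f.ker : Set P))
    (α : V) (h0 : fixSub Γ (ρ.comp j) {α} = ⊤) :
    ∃ (β : V) (hβ : β ∈ Γ.neighborSet α) (Q : Subgroup P)
      (ψ : Q →* Equiv.Perm (Γ.neighborSet α)) (f' : Q →* A),
      Function.Surjective f' ∧ ψ.ker ≤ f'.ker ∧
      ψ.range ≤ localAction Γ ρ hpres α ⊓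
          MulAction.stabilizer (Equiv.Perm (Γ.neighborSet α)) (⟨β, hβ⟩ : Γ.neighborSet α) := by
  obtain ⟨v, w, Q, hvw, hQ, hmap, hk⟩ := exists_local_section Γ hc (ρ.comp j)
    (fun g => hpres (j g)) hclosed hfaith f hf hker α h0
  obtain ⟨g, hg⟩ := htrans α v
  have hg' : ρ g⁻¹ v = α := by rw [map_inv, Equiv.Perm.inv_eq_iff_eq, hg]
  have hfix : ∀ q : Q, ρ (g⁻¹ * j q * g) α = α := by
    intro q
    have := (hQ q q.2).1
    simp only [MonoidHom.comp_apply] at this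
    rw [map_mul, map_mul, Equiv.Perm.mul_apply, Equiv.Perm.mul_apply, hg, this, hg']
  have hβ : ρ g⁻¹ w ∈ Γ.neighborSet α := by
    have := hpres g⁻¹ v w hvw
    rwa [hg'] at this
  have hval : ∀ (q : Q) (y : Γ.neighborSet α),
      ((localPerm Γ ρ hpres α (g⁻¹ * j q * g) (hfix q) y : Γ.neighborSet α) : V)
        = ρ g⁻¹ (ρ (j q) (ρ g y)) := by
    intro q y
    simp [localPerm]
  have hcan : ∀ y, ρ g (ρ g⁻¹ y) = y := fun y => by
    rw [map_inv]; exact Equiv.apply_symm_apply _ _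
  have hcan' : ∀ y, ρ g⁻¹ (ρ g y) = y := fun y => by
    rw [map_inv]; exact Equiv.symm_apply_apply _ _
  let ψ : Q →* Equiv.Perm (Γ.neighborSet α) :=
    { toFun := fun q => localPerm Γ ρ hpres α (g⁻¹ * j q * g) (hfix q)
      map_one' := by
        ext y
        rw [hval]
        simp
      map_mul' := by
        intro a b
        ext y
        rw [Equiv.Perm.mul_apply, hval, hval, hval, hcan]
        simp }
  refine ⟨ρ g⁻¹ w, hβ, Q, ψ, f.comp Q.subtype, ?_, ?_, ?_⟩
  · intro a
    have : a ∈ Q.map f := by rw [hmap]; trivial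
    obtain ⟨q, hq, rfl⟩ := this
    exact ⟨⟨q, hq⟩, rfl⟩
  · intro q hq
    refine hk q q.2 ?_
    intro y hy
    have hy' : ρ g⁻¹ y ∈ Γ.neighborSet α := by
      have := hpres g⁻¹ v y hy
      rwa [hg'] at this
    have h1 : ψ q = 1 := hq
    have h2 := hval q ⟨_, hy'⟩
    have h3 : ((localPerm Γ ρ hpres α (g⁻¹ * j q * g) (hfix q) ⟨_, hy'⟩ : Γ.neighborSet α) : V)
        = ρ g⁻¹ y := by
      change ((ψ q ⟨_, hy'⟩ : Γ.neighborSet α) : V) = _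
      rw [h1]; rfl
    rw [h3] at h2
    simp only [hcan] at h2
    exact ((ρ g⁻¹).injective h2).symm
  · rintro _ ⟨q, rfl⟩
    refine ⟨⟨_, hfix q, rfl⟩, ?_⟩
    change ψ q • (⟨ρ g⁻¹ w, hβ⟩ : Γ.neighborSet α) = _
    apply Subtype.ext
    have := (hQ q q.2).2
    simp only [MonoidHom.comp_apply] at this
    refine (hval q _).trans ?_
    simp only [hcan, this]

theorem subquot_fin {Q A X : Type*} [Group Q] [Group A] (d : ℕ) (hd : Nat.card X = d) [Finite X]
    (b : X) (ψ : Q →* Equiv.Perm X) (f : Q →* A)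
    (hf : Function.Surjective f) (hk : ψ.ker ≤ f.ker)
    (hb : ψ.range ≤ MulAction.stabilizer (Equiv.Perm X) b) :
    ∃ (H N : Subgroup (Equiv.Perm (Fin (d - 1)))) (_ : N ≤ H)
        (hn : (N.subgroupOf H).Normal),
      Nonempty (letI := hn; (↥H ⧸ N.subgroupOf H) ≃* A) := by
  classical
  have hfixb : ∀ q, ψ q b = b := fun q => hb ⟨q, rfl⟩
  have hne : ∀ q x, ψ q x ≠ b ↔ x ≠ b := by
    intro q x
    rw [not_iff_not]
    constructor
    · intro h
      exact (ψ q).injective (h.trans (hfixb q).symm)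
    · rintro rfl
      exact hfixb q
  let θ : Q →* Equiv.Perm {x : X // x ≠ b} :=
    { toFun := fun q => (ψ q).subtypePerm (hne q)
      map_one' := by ext; simp
      map_mul' := by intro a c; ext x; simp; rfl }
  have hcard : Nat.card {x : X // x ≠ b} = d - 1 := by
    haveI := Fintype.ofFinite X
    rw [Nat.card_eq_fintype_card] at hd ⊢
    rw [← hd]
    simp
  let e : {x : X // x ≠ b} ≃ Fin (d - 1) := Finite.equivFinOfCardEq hcard
  let ψ' : Q →* Equiv.Perm (Fin (d - 1)) := (e.permCongrHom).toMonoidHom.comp θ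
  have hk' : ψ'.ker ≤ f.ker := by
    intro q hq
    apply hk
    have h1 : e.permCongrHom (θ q) = 1 := hq
    have h2 : θ q = 1 := (map_eq_one_iff e.permCongrHom e.permCongrHom.injective).1 h1
    rw [MonoidHom.mem_ker]
    ext x
    by_cases hx : x = b
    · subst hx; exact hfixb q
    · have := congrArg (fun s : Equiv.Perm {x : X // x ≠ b} => (s ⟨x, hx⟩ : X)) h2
      exact this
  obtain ⟨H, N, hNH, hn, _, h⟩ := subquot_of_hom ψ' f hf hk'
  exact ⟨H, N, hNH, hn, h⟩

/-- Theorem (local simple content vs.\ local action): let `G` be a second countable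
t.d.l.c. group acting faithfully on a Cayley–Abels graph `Γ` of degree `d`, let `α` be a
vertex and `L` the local action of `G` at `α`.  If a finite simple group `A` is a
composition factor of every compact open subgroup of `G`, then `A` is a subquotient of the
stabilizer `L_β` of some neighbour `β` of `α` in `L`; in particular `A` is a subquotient
of the symmetric group on `d - 1` letters. -/
theorem local_simple_content_subquotient_of_local_action
    {G V : Type*} [Group G] [TopologicalSpace G]
    [IsTopologicalGroup G] [T2Space G] [TotallyDisconnectedSpace G] [LocallyCompactSpace G]
    [SecondCountableTopology G]
    (Γ : SimpleGraph V) (ρ : G →* Equiv.Perm V) (hCA : IsCayleyAbels Γ ρ)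
    (hpres : ∀ (g : G) (u v : V), Γ.Adj u v → Γ.Adj (ρ g u) (ρ g v))
    (hfaith : ∀ g : G, (∀ v : V, ρ g v = v) → g = 1)
    (d : ℕ) (hdeg : ∀ v : V, (Γ.neighborSet v).ncard = d)
    (α : V)
    (A : Type*) [Group A] [Finite A] [IsSimpleGroup A]
    (hA : ∀ U : Subgroup G, IsCompact (U : Set G) → IsOpen (U : Set G) →
      IsCompositionFactor ↥U A) :
    (∃ (β : V) (hβ : β ∈ Γ.neighborSet α)
        (H N : Subgroup (Equiv.Perm (Γ.neighborSet α))) (_ : N ≤ H)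
        (hn : (N.subgroupOf H).Normal),
      H ≤ localAction Γ ρ hpres α ⊓
          MulAction.stabilizer (Equiv.Perm (Γ.neighborSet α)) (⟨β, hβ⟩ : Γ.neighborSet α) ∧
      Nonempty (letI := hn; (↥H ⧸ N.subgroupOf H) ≃* A)) ∧
    (∃ (H N : Subgroup (Equiv.Perm (Fin (d - 1)))) (_ : N ≤ H)
        (hn : (N.subgroupOf H).Normal),
      Nonempty (letI := hn; (↥H ⧸ N.subgroupOf H) ≃* A)) := by
  obtain ⟨hc, hlf, -, htrans, hco⟩ := hCA
  have hclosed : ∀ v, IsClosed {g : G | ρ g v = v} := fun v => (hco v).1.isClosed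
  have hUeq : (fixSub Γ ρ {α} : Set G) = ⋂ y ∈ insert α (Γ.neighborSet α), {g : G | ρ g y = y} := by
    ext g
    simp [fixSub]
  have hUopen : IsOpen (fixSub Γ ρ {α} : Set G) := by
    rw [hUeq]
    exact ((hlf α).insert α).isOpen_biInter fun y _ => (hco y).2
  have hUcomp : IsCompact (fixSub Γ ρ {α} : Set G) := by
    refine (hco α).1.of_isClosed_subset ?_ ?_
    · rw [hUeq]
      exact isClosed_biInter fun y _ => hclosed y
    · intro g hg
      exact hg α rfl α (Or.inl rfl)
  obtain ⟨S, i, hlt, ⟨e⟩⟩ := hA _ hUcomp hUopen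
  haveI : CompactSpace (fixSub Γ ρ {α}) := isCompact_iff_compactSpace.1 hUcomp
  haveI : CompactSpace (S.H i) := isCompact_iff_compactSpace.1 (S.isClosed i).isCompact
  haveI hn := S.normal i
  let f : S.H i →* A :=
    e.toMonoidHom.comp (QuotientGroup.mk' ((S.H (i + 1)).subgroupOf (S.H i)))
  have hf : Function.Surjective f :=
    e.surjective.comp (QuotientGroup.mk'_surjective _)
  have hfk : f.ker = (S.H (i + 1)).subgroupOf (S.H i) := by
    ext x
    rw [MonoidHom.mem_ker]
    change e _ = 1 ↔ _
    rw [map_eq_one_iff e e.injective]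
    exact QuotientGroup.eq_one_iff x
  have hkc : IsClosed (f.ker : Set (S.H i)) := by
    rw [hfk]
    exact (S.isClosed (i + 1)).preimage continuous_subtype_val
  haveI : f.ker.FiniteIndex := Subgroup.finiteIndex_ker f
  have hko : IsOpen (f.ker : Set (S.H i)) := f.ker.isOpen_of_isClosed_of_finiteIndex hkc
  let j : S.H i →* G := (fixSub Γ ρ {α}).subtype.comp (S.H i).subtype
  have hj : Continuous j := continuous_subtype_val.comp continuous_subtype_val
  obtain ⟨β, hβ, Q, ψ, f', hf', hk, hr⟩ := subquot_main Γ hc ρ htrans hpres j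
    (fun v => (hclosed v).preimage hj)
    (fun p hp => Subtype.ext (Subtype.ext (hfaith (j p) hp))) f hf hko α
    (by
      rw [eq_top_iff]
      intro p _
      exact p.1.2)
  constructor
  · obtain ⟨H, N, hNH, hn, rfl, h⟩ := subquot_of_hom ψ f' hf' hk
    exact ⟨β, hβ, _, N, hNH, hn, hr, h⟩
  · haveI : Finite (Γ.neighborSet α) := hlf α
    exact subquot_fin d (by rw [Nat.card_coe_set_eq, hdeg]) ⟨β, hβ⟩ ψ f' hf' hk
      (hr.trans inf_le_right)
end

section
/- Let G be a non-discrete, second countable t.d.l.c. group, let A be a finite simple group that is a composition factor of every compact open subgroup of G, and let p be a prime dividing the order of A. Then p belongs to the local prime content of G: every compact open subgroup U of G contains a compact open subgroup V of G with p dividing the index [U : V]. -/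
/-- Let `G` be a non-discrete second countable t.d.l.c. group, `A` a finite simple group
that is a composition factor of every compact open subgroup of `G`, and `p` a prime
dividing the order of `A`.  Then `p` belongs to the local prime content of `G`: every
compact open subgroup `U` of `G` contains a compact open subgroup `V` with `p ∣ [U : V]`. -/
theorem prime_of_local_simple_content_mem_local_prime_content
    (G : Type*) [Group G] [TopologicalSpace G]
    [IsTopologicalGroup G] [T2Space G] [TotallyDisconnectedSpace G] [LocallyCompactSpace G]
    [SecondCountableTopology G] (hnd : ¬ DiscreteTopology G)
    (A : Type*) [Group A] [Finite A] [IsSimpleGroup A]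
    (hA : ∀ U : Subgroup G, IsCompact (U : Set G) → IsOpen (U : Set G) →
      IsCompositionFactor ↥U A)
    (p : ℕ) (hp : p.Prime) (hdvd : p ∣ Nat.card A) :
    ∀ U : Subgroup G, IsCompact (U : Set G) → IsOpen (U : Set G) →
      ∃ V : Subgroup G, IsCompact (V : Set G) ∧ IsOpen (V : Set G) ∧ V ≤ U ∧
        p ∣ V.relIndex U := by
  intro U hUc hUo
  obtain ⟨S, i, hlt, ⟨e⟩⟩ := hA U hUc hUo
  haveI : CompactSpace U := isCompact_iff_compactSpace.mp hUc
  have hcard : ((S.H (i + 1)).subgroupOf (S.H i)).index = Nat.card A := Nat.card_congr e.toEquiv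
  haveI : ((S.H (i + 1)).subgroupOf (S.H i)).FiniteIndex :=
    ⟨by rw [hcard]; exact Nat.card_pos.ne'⟩
  have hcl : IsClosed ((S.H (i + 1)).subgroupOf (S.H i) : Set (S.H i)) :=
    (S.isClosed (i + 1)).preimage continuous_subtype_val
  have hop := Subgroup.isOpen_of_isClosed_of_finiteIndex _ hcl
  obtain ⟨O, hO, hOe⟩ := isOpen_induced_iff.mp hop
  have h1 : (1 : U) ∈ O := by
    have : (1 : S.H i) ∈ Subtype.val ⁻¹' O := by
      rw [hOe]; exact one_mem _
    exact this
  obtain ⟨W, hW⟩ := ProfiniteGrp.exist_openNormalSubgroup_sub_open_nhds_of_one hO h1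
  have hWo : IsOpen ((W.toSubgroup : Subgroup U) : Set U) := W.isOpen'
  have hle : (W.toSubgroup : Subgroup U).subgroupOf (S.H i) ≤
      (S.H (i + 1)).subgroupOf (S.H i) := by
    intro x hx
    have : x ∈ Subtype.val ⁻¹' O := hW hx
    rw [hOe] at this
    exact this
  have hd1 : p ∣ (W.toSubgroup : Subgroup U).relIndex (S.H i) :=
    (hdvd.trans hcard.symm.dvd).trans (Subgroup.index_dvd_of_le hle)
  have hd2 : p ∣ (W.toSubgroup : Subgroup U).index :=
    hd1.trans (Subgroup.relIndex_dvd_index_of_normal _ _)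
  refine ⟨(W.toSubgroup : Subgroup U).map U.subtype, ?_, ?_, ?_, ?_⟩
  · exact ((Subgroup.isClosed_of_isOpen _ hWo).isCompact).image continuous_subtype_val
  · exact hUo.isOpenMap_subtype_val _ hWo
  · exact Subgroup.map_subtype_le _
  · rw [Subgroup.relIndex, Subgroup.subgroupOf,
      Subgroup.comap_map_eq_self_of_injective U.subtype_injective]
    exact hd2
end

section
/- Let Γ be a locally finite simple graph, let G be a group acting vertex-transitively on Γ by graph automorphisms, and let N be a normal subgroup of G. Define the quotient graph Γ/N: its vertices are the N-orbits on the vertices of Γ, and two distinct orbits A ≠ B are adjacent if and only if some vertex in A is adjacent in Γ to some vertex in B. Then the degree of each vertex of Γ/N is at most the degree of Γ (the common vertex degree of Γ). Moreover, the degree of Γ/N equals the degree of Γ if and only if no two distinct vertices of Γ at distance at most 2 lie in the same N-orbit. -/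
/-- The setoid on the vertex set whose classes are the orbits of the subgroup `N`,
acting through `ρ`. -/
def orbitSetoid {G V : Type*} [Group G] (ρ : G →* Equiv.Perm V) (N : Subgroup G) :
    Setoid V where
  r v w := ∃ k ∈ N, ρ k v = w
  iseqv := by
    constructor
    · intro v
      exact ⟨1, one_mem N, by simp⟩
    · rintro v w ⟨k, hk, rfl⟩
      refine ⟨k⁻¹, inv_mem hk, ?_⟩
      simp
    · rintro u v w ⟨k, hk, rfl⟩ ⟨l, hl, rfl⟩
      exact ⟨l * k, mul_mem hl hk, by simp⟩

/-- The quotient graph of a simple graph by an equivalence relation on its vertices: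
two distinct classes are adjacent iff some element of one is adjacent to some element of
the other. -/
def quotientGraph {V : Type*} (Γ : SimpleGraph V) (s : Setoid V) :
    SimpleGraph (Quotient s) where
  Adj A B := A ≠ B ∧ ∃ a b : V, Quotient.mk s a = A ∧ Quotient.mk s b = B ∧ Γ.Adj a b
  symm := by
    constructor
    rintro A B ⟨hne, a, b, ha, hb, hab⟩
    exact ⟨hne.symm, b, a, hb, ha, hab.symm⟩
  loopless := by
    constructor
    rintro A ⟨hne, -⟩
    exact hne rfl

/-- Let `Γ` be a locally finite graph of degree `d` with a vertex-transitive action of a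
group `G`, and let `N` be a normal subgroup of `G`.  Then each vertex of the quotient
graph `Γ/N` (on the `N`-orbits) has degree at most `d`, with equality (for all vertices)
if and only if no two distinct vertices of `Γ` at distance at most `2` lie in the same
`N`-orbit. -/
theorem quotient_graph_degree {G V : Type*} [Group G]
    (Γ : SimpleGraph V) (hlf : ∀ v : V, (Γ.neighborSet v).Finite)
    (ρ : G →* Equiv.Perm V)
    (hpres : ∀ (g : G) (u v : V), Γ.Adj u v → Γ.Adj (ρ g u) (ρ g v))
    (htrans : ∀ u v : V, ∃ g : G, ρ g u = v)
    (N : Subgroup G) (hN : N.Normal)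
    (d : ℕ) (hdeg : ∀ v : V, (Γ.neighborSet v).ncard = d) :
    (∀ A : Quotient (orbitSetoid ρ N),
        ((quotientGraph Γ (orbitSetoid ρ N)).neighborSet A).ncard ≤ d) ∧
    ((∀ A : Quotient (orbitSetoid ρ N),
        ((quotientGraph Γ (orbitSetoid ρ N)).neighborSet A).ncard = d) ↔
      ∀ u v : V, u ≠ v → (Γ.Adj u v ∨ ∃ w : V, Γ.Adj u w ∧ Γ.Adj w v) →
        ¬ ∃ k ∈ N, ρ k u = v) := by
  have hmk : ∀ a b : V, Quotient.mk (orbitSetoid ρ N) a = Quotient.mk (orbitSetoid ρ N) b ↔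
      ∃ k ∈ N, ρ k a = b := fun a b => Quotient.eq (r := orbitSetoid ρ N)
  have hS : ∀ v : V, (quotientGraph Γ (orbitSetoid ρ N)).neighborSet
      (Quotient.mk (orbitSetoid ρ N) v) ⊆
      Quotient.mk (orbitSetoid ρ N) '' (Γ.neighborSet v) := by
    rintro v B ⟨-, a, b, ha, rfl, hab⟩
    obtain ⟨k, hk, rfl⟩ := (hmk _ _).1 ha
    exact ⟨ρ k b, hpres k a b hab, ((hmk _ _).2 ⟨k, hk, rfl⟩).symm⟩
  have hfin : ∀ v : V, (Quotient.mk (orbitSetoid ρ N) '' (Γ.neighborSet v)).Finite :=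
    fun v => (hlf v).image _
  have him : ∀ v : V, (Quotient.mk (orbitSetoid ρ N) '' (Γ.neighborSet v)).ncard ≤ d :=
    fun v => (Set.ncard_image_le (hlf v)).trans (hdeg v).le
  refine ⟨?_, ?_, ?_⟩
  · intro A
    induction A using Quotient.inductionOn with
    | h v => exact (Set.ncard_le_ncard (hS v) (hfin v)).trans (him v)
  · intro h u v huv hadj hk
    have hq := (hmk u v).2 hk
    have heq : ∀ w : V, (quotientGraph Γ (orbitSetoid ρ N)).neighborSet
        (Quotient.mk (orbitSetoid ρ N) w) =
        Quotient.mk (orbitSetoid ρ N) '' (Γ.neighborSet w) := fun w =>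
      Set.eq_of_subset_of_ncard_le (hS w) ((him w).trans (h _).ge) (hfin w)
    rcases hadj with hadj | ⟨w, huw, hwv⟩
    · have hm : Quotient.mk (orbitSetoid ρ N) v ∈
          (quotientGraph Γ (orbitSetoid ρ N)).neighborSet
            (Quotient.mk (orbitSetoid ρ N) u) := by
        rw [heq u]
        exact ⟨v, hadj, rfl⟩
      exact hm.1 hq
    · have hc : (Quotient.mk (orbitSetoid ρ N) '' (Γ.neighborSet w)).ncard =
          (Γ.neighborSet w).ncard := by
        rw [← heq w, h, hdeg]
      exact huv ((Set.ncard_image_iff (hlf w)).1 hc huw.symm hwv hq)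
  · intro h A
    induction A using Quotient.inductionOn with
    | h w =>
      have heq : (quotientGraph Γ (orbitSetoid ρ N)).neighborSet
          (Quotient.mk (orbitSetoid ρ N) w) =
          Quotient.mk (orbitSetoid ρ N) '' (Γ.neighborSet w) := by
        refine (hS w).antisymm ?_
        rintro _ ⟨b, hb, rfl⟩
        refine ⟨fun hq => ?_, w, b, rfl, rfl, hb⟩
        exact h w b (Γ.ne_of_adj hb) (Or.inl hb) ((hmk _ _).1 hq)
      have hinj : Set.InjOn (Quotient.mk (orbitSetoid ρ N)) (Γ.neighborSet w) := by
        intro a ha b hb hab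
        by_contra hne
        exact h a b hne (Or.inr ⟨w, SimpleGraph.Adj.symm ha, hb⟩) ((hmk _ _).1 hab)
      exact (congrArg Set.ncard heq).trans ((Set.InjOn.ncard_image hinj).trans (hdeg w))
end
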